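/- arXiv:1008.1124 — 6 statements merged into one kernel-verified Lean document; each statement's English description precedes it below -/
import Mathlib

section
/- Let γ : ℝ × ℝ³ → ℝ³ and P : ℝ × ℝ³ → ℝ be smooth, suppose that for every time t the map γ(t,·) : ℝ³ → ℝ³ is a diffeomorphism, and suppose (γ,P) solves system (N). Define, for (t,x) ∈ ℝ × ℝ³, u(t,x) = (∂γ/∂t)(t, γ(t,·)⁻¹(x)), B(t,x) = (∂γ/∂ξ¹)(t, γ(t,·)⁻¹(x)), and p(t,x) = P(t, γ(t,·)⁻¹(x)) − ½|B(t,x)|². Then (u, B, p) with constant density ρ = 1 solves the incompressible ideal MHD equations: div u = 0, u_t + (u·∇)u + B × curl B + ∇p = 0, B_t = curl(u × B), div B = 0. -/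
open Matrix

noncomputable section

abbrev V3 := Fin 3 → ℝ

/-- Partial derivative of `f : ℝ³ → E` with respect to the `i`-th coordinate. -/
noncomputable def pdx {E : Type*} [NormedAddCommGroup E] [NormedSpace ℝ E]
    (i : Fin 3) (f : V3 → E) (x : V3) : E :=
  deriv (fun s => f (Function.update x i s)) (x i)

/-- Spatial divergence of a vector field on `ℝ³`. -/
noncomputable def divV (v : V3 → V3) (x : V3) : ℝ :=
  ∑ i, pdx i v x i

/-- Spatial gradient of a scalar field on `ℝ³`. -/
noncomputable def gradV (f : V3 → ℝ) (x : V3) : V3 :=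
  fun i => pdx i f x

/-- Spatial curl of a vector field on `ℝ³`. -/
noncomputable def curlV (v : V3 → V3) (x : V3) : V3 :=
  ![pdx 1 v x 2 - pdx 2 v x 1,
    pdx 2 v x 0 - pdx 0 v x 2,
    pdx 0 v x 1 - pdx 1 v x 0]

/-- Convective derivative `(u·∇)v` of a vector field on `ℝ³`. -/
noncomputable def advectV (u v : V3 → V3) (x : V3) : V3 :=
  fun i => ∑ j, u x j * pdx j v x i

/-- System (N): the incompressible MHD equations in natural curvilinear coordinates,
for `γ : ℝ × ℝ³ → ℝ³` (curried, the spatial argument is `ξ = (ξ¹,ξ²,ξ³)`) and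
`P : ℝ × ℝ³ → ℝ`. -/
def SystemN (γ : ℝ → V3 → V3) (P : ℝ → V3 → ℝ) : Prop :=
  (∀ (t : ℝ) (ξ : V3),
      deriv (fun s => deriv (fun s' => γ s' ξ) s) t
          - pdx 0 (fun y => pdx 0 (γ t) y) ξ
          + pdx 0 (P t) ξ • crossProduct (pdx 1 (γ t) ξ) (pdx 2 (γ t) ξ)
          + pdx 1 (P t) ξ • crossProduct (pdx 2 (γ t) ξ) (pdx 0 (γ t) ξ)
          + pdx 2 (P t) ξ • crossProduct (pdx 0 (γ t) ξ) (pdx 1 (γ t) ξ) = 0)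
    ∧ (∀ (t : ℝ) (ξ : V3), (Matrix.of fun i j => pdx j (γ t) ξ i).det = 1)

/-!
`u(t, ·)` is the velocity field of the motion `t ↦ γ(t, ·)`, and `B(t, ·)` is the velocity field, at
time `0`, of the motion `s ↦ γ(t, · + s e₁)`. Both motions preserve volume, so by Liouville's
formula `∂/∂t (det ∂γ/∂ξ) = (div u) det ∂γ/∂ξ` both fields are divergence free. Evaluated
along the motion, each remaining equation becomes a statement about `γ`:

* `B_t + (u·∇)B = (B·∇)u` is the symmetry `γ_{ξ¹t} = γ_{tξ¹}` of mixed partial derivatives;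
* `u_t + (u·∇)u` is `γ_tt` and `(B·∇)B` is `γ_{ξ¹ξ¹}`, while the combination of cross products in
  system (N) is the cofactor matrix of `∂γ/∂ξ` applied to the `ξ`-gradient of `P`, that is, the
  gradient of `P ∘ γ⁻¹` in `x`.

The curl forms follow from `B × curl B = ∇(½|B|²) - (B·∇)B` and from the expansion of
`curl (u × B)` for divergence free fields. The fields are differentiable jointly in `(t, x)` by the
inverse function theorem for `(t, ξ) ↦ (t, γ(t, ξ))`, whose Jacobian determinant is `1`.
-/

open Function

section Jacobi

variable {𝕜 : Type*} [NontriviallyNormedField 𝕜]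

theorem hasDerivAt_matrix_det_of_mul {n : Type*} [Fintype n] [DecidableEq n]
    {M : 𝕜 → Matrix n n 𝕜} {L : Matrix n n 𝕜} {t : 𝕜}
    (hM : ∀ i j, HasDerivAt (fun s => M s i j) ((L * M t) i j) t) :
    HasDerivAt (fun s => (M s).det) (L.trace * (M t).det) t := by
  let D : ContinuousMultilinearMap 𝕜 (fun _ : n => n → 𝕜) 𝕜 :=
    ⟨(detRowAlternating (n := n) (R := 𝕜)).toMultilinearMap, continuous_id.matrix_det⟩
  have hD : HasDerivAt (fun s => (M s).det) (D.linearDeriv (M t) (L * M t)) t :=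
    (D.hasFDerivAt (M t)).comp_hasDerivAt t
      (hasDerivAt_pi.2 fun i => hasDerivAt_pi.2 fun j => hM i j)
  have row_update (i : n) : D (Function.update (M t) i ((L * M t) i)) = L i i * (M t).det := by
    have hrow : (L * M t) i = ∑ k, L i k • M t k := by
      ext j
      simp [Matrix.mul_apply]
    rw [hrow]
    exact det_updateRow_sum (M t) i (L i)
  have hvalue : D.linearDeriv (M t) (L * M t) = L.trace * (M t).det :=
    calc
      _ = ∑ i, D (Function.update (M t) i ((L * M t) i)) := D.linearDeriv_apply _ _
      _ = ∑ i, L i i * (M t).det := Finset.sum_congr rfl fun i _ => row_update i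
      _ = L.trace * (M t).det := (Finset.sum_mul ..).symm
  rwa [hvalue] at hD

theorem hasDerivAt_det_of_comp [CompleteSpace 𝕜] {V : Type*} [NormedAddCommGroup V]
    [NormedSpace 𝕜 V] [FiniteDimensional 𝕜 V] {A : 𝕜 → V →L[𝕜] V} {L : V →L[𝕜] V} {t : 𝕜}
    (hA : HasDerivAt A (L ∘L A t) t) :
    HasDerivAt (fun s => (A s).det) (LinearMap.trace 𝕜 V L * (A t).det) t := by
  let b := Module.finBasis 𝕜 V
  have entry (i j) : HasDerivAt (fun s => LinearMap.toMatrix b b (A s) i j)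
      ((LinearMap.toMatrix b b L * LinearMap.toMatrix b b (A t)) i j) t := by
    rw [← LinearMap.toMatrix_comp]
    have hcoord := (b.coord i).toContinuousLinearMap.hasFDerivAt.comp_hasDerivAt t
      (hA.clm_apply (hasDerivAt_const t (b j)))
    simp only [LinearMap.toMatrix_apply]
    simpa [Function.comp_def] using hcoord
  simpa [ContinuousLinearMap.det, LinearMap.trace_eq_matrix_trace 𝕜 b] using
    hasDerivAt_matrix_det_of_mul entry

end Jacobi

section TimeDependent

variable {V E : Type*} [NormedAddCommGroup V] [NormedSpace ℝ V] [NormedAddCommGroup E]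
  [NormedSpace ℝ E] {F : ℝ → V → E} {t : ℝ} {x : V}

theorem hasDerivAt_uncurry_along_curve {c : ℝ → V} {c' : V}
    (hF : DifferentiableAt ℝ (uncurry F) (t, c t)) (hc : HasDerivAt c c' t) :
    HasDerivAt (fun s => F s (c s)) (fderiv ℝ (uncurry F) (t, c t) (1, c')) t := by
  have hgraph : HasDerivAt (fun s => (s, c s)) (1, c') t := (hasDerivAt_id' t).prodMk hc
  exact hF.hasFDerivAt.comp_hasDerivAt (l := uncurry F) t hgraph

theorem hasDerivAt_of_differentiableAt_uncurry (hF : DifferentiableAt ℝ (uncurry F) (t, x)) :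
    HasDerivAt (fun s => F s x) (fderiv ℝ (uncurry F) (t, x) (1, 0)) t :=
  hasDerivAt_uncurry_along_curve hF (hasDerivAt_const t x)

theorem hasFDerivAt_of_differentiableAt_uncurry (hF : DifferentiableAt ℝ (uncurry F) (t, x)) :
    HasFDerivAt (F t) (fderiv ℝ (uncurry F) (t, x) ∘L .inr ℝ ℝ V) x :=
  hF.hasFDerivAt.comp x (hasFDerivAt_prodMk_right t x)

theorem differentiable_slice (hF : Differentiable ℝ (uncurry F)) (t : ℝ) : Differentiable ℝ (F t) :=
  fun x => (hasFDerivAt_of_differentiableAt_uncurry (hF (t, x))).differentiableAt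

theorem differentiable_uncurry_comp {U : Type*} [NormedAddCommGroup U] [NormedSpace ℝ U]
    {Y : ℝ → U → V} (hF : Differentiable ℝ (uncurry F)) (hY : Differentiable ℝ (uncurry Y)) :
    Differentiable ℝ (uncurry fun t x => F t (Y t x)) :=
  hF.comp (differentiable_fst.prodMk hY)

theorem deriv_along_curve {c : ℝ → V} (hF : DifferentiableAt ℝ (uncurry F) (t, c t))
    (hc : DifferentiableAt ℝ c t) :
    deriv (fun s => F s (c s)) t =
      deriv (fun s => F s (c t)) t + fderiv ℝ (F t) (c t) (deriv c t) := by
  rw [(hasDerivAt_uncurry_along_curve hF hc.hasDerivAt).deriv,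
    (hasDerivAt_of_differentiableAt_uncurry hF).deriv,
    (hasFDerivAt_of_differentiableAt_uncurry hF).fderiv]
  simp [← map_add]

theorem contDiff_uncurry_deriv {n : WithTop ℕ∞} (hF : ContDiff ℝ (n + 1) (uncurry F)) :
    ContDiff ℝ n (uncurry fun t x => deriv (fun s => F s x) t) := by
  have heq : (uncurry fun t x => deriv (fun s => F s x) t) =
      fun q => fderiv ℝ (uncurry F) q (1, 0) :=
    funext fun q => (hasDerivAt_of_differentiableAt_uncurry
      (hF.differentiable (by simp) q)).deriv
  rw [heq]
  exact (hF.fderiv_right le_rfl).clm_apply contDiff_const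

theorem contDiff_uncurry_fderiv {n : WithTop ℕ∞} (hF : ContDiff ℝ (n + 1) (uncurry F)) :
    ContDiff ℝ n (uncurry fun t x => fderiv ℝ (F t) x) := by
  have heq : (uncurry fun t x => fderiv ℝ (F t) x) =
      fun q => fderiv ℝ (uncurry F) q ∘L .inr ℝ ℝ V :=
    funext fun q => (hasFDerivAt_of_differentiableAt_uncurry
      (hF.differentiable (by simp) q)).fderiv
  rw [heq]
  exact (hF.fderiv_right le_rfl).clm_comp contDiff_const

theorem hasDerivAt_fderiv_comm (hF : ContDiff ℝ 2 (uncurry F)) (t : ℝ) (x : V) :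
    HasDerivAt (fun s => fderiv ℝ (F s) x)
      (fderiv ℝ (fun y => deriv (fun s => F s y) t) x) t := by
  have hF₁ : Differentiable ℝ (uncurry F) := hF.differentiable two_ne_zero
  let G : ℝ → V → ℝ × V →L[ℝ] E := fun s y => fderiv ℝ (uncurry F) (s, y)
  have hG : DifferentiableAt ℝ (uncurry G) (t, x) :=
    (hF.fderiv_right (m := 1) le_rfl).differentiable one_ne_zero (t, x)
  have htime : (fun y => deriv (fun s => F s y) t) = fun y => G t y (1, 0) :=
    funext fun y => (hasDerivAt_of_differentiableAt_uncurry (hF₁ (t, y))).deriv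
  have hspace : (fun s => fderiv ℝ (F s) x) = fun s => G s x ∘L .inr ℝ ℝ V :=
    funext fun s => (hasFDerivAt_of_differentiableAt_uncurry (hF₁ (s, x))).fderiv
  have hGtime := (hasFDerivAt_of_differentiableAt_uncurry hG).clm_apply
    (hasFDerivAt_const ((1, 0) : ℝ × V) x)
  have hGspace := (hasDerivAt_of_differentiableAt_uncurry hG).clm_comp
    (hasDerivAt_const t (ContinuousLinearMap.inr ℝ ℝ V))
  rw [htime, hspace, hGtime.fderiv]
  convert! hGspace using 1
  ext v
  have hsymm : fderiv ℝ (uncurry G) (t, x) (0, v) (1, 0) =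
      fderiv ℝ (uncurry G) (t, x) (1, 0) (0, v) :=
    hF.contDiffAt.isSymmSndFDerivAt (by simp) (0, v) (1, 0)
  simpa using hsymm

end TimeDependent

section Motion

variable {V : Type*} [NormedAddCommGroup V] [NormedSpace ℝ V] [FiniteDimensional ℝ V]
  {X : ℝ → V → V}

theorem hasDerivAt_det_fderiv_motion (hX : ContDiff ℝ 2 (uncurry X)) {v : V → V} {t : ℝ} {ξ : V}
    (hv : DifferentiableAt ℝ v (X t ξ)) (hXv : ∀ y, deriv (fun s => X s y) t = v (X t y)) :
    HasDerivAt (fun s => (fderiv ℝ (X s) ξ).det)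
      (LinearMap.trace ℝ V (fderiv ℝ v (X t ξ)) * (fderiv ℝ (X t) ξ).det) t := by
  have hXt : DifferentiableAt ℝ (X t) ξ :=
    differentiable_slice (hX.differentiable two_ne_zero) t ξ
  have hJ := hasDerivAt_fderiv_comm hX t ξ
  rw [funext hXv, fderiv_fun_comp _ hv hXt] at hJ
  exact hasDerivAt_det_of_comp hJ

theorem trace_fderiv_velocity_eq_zero (hX : ContDiff ℝ 2 (uncurry X)) {v : V → V} {t : ℝ} {ξ : V}
    (hdet : ∀ s, (fderiv ℝ (X s) ξ).det = 1) (hv : DifferentiableAt ℝ v (X t ξ))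
    (hXv : ∀ y, deriv (fun s => X s y) t = v (X t y)) :
    LinearMap.trace ℝ V (fderiv ℝ v (X t ξ)) = 0 := by
  have hderiv := hasDerivAt_det_fderiv_motion hX hv hXv
  simp only [hdet, mul_one] at hderiv
  exact hderiv.unique (hasDerivAt_const t 1)

theorem trace_fderiv_direction_eq_zero {f v : V → V} (hf : ContDiff ℝ 2 f) {e ξ : V}
    (hdet : ∀ y, (fderiv ℝ f y).det = 1) (hv : DifferentiableAt ℝ v (f ξ))
    (hfv : ∀ y, fderiv ℝ f y e = v (f y)) :
    LinearMap.trace ℝ V (fderiv ℝ v (f ξ)) = 0 := by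
  let X : ℝ → V → V := fun s y => f (y + s • e)
  have hX : ContDiff ℝ 2 (uncurry X) := hf.comp (by fun_prop)
  have hXv (y : V) : deriv (fun s => X s y) 0 = v (X 0 y) := by
    have hline : HasDerivAt (fun s : ℝ => y + s • e) e 0 := by
      simpa using ((hasDerivAt_id' (0 : ℝ)).smul_const e).const_add y
    have hfy : HasFDerivAt f (fderiv ℝ f y) (y + (0 : ℝ) • e) := by
      simpa using (hf.differentiable two_ne_zero y).hasFDerivAt
    simpa [X, ← hfv, Function.comp_def] using (hfy.comp_hasDerivAt 0 hline).deriv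
  have hXdet (s : ℝ) : (fderiv ℝ (X s) ξ).det = 1 := by
    rw [fderiv_comp_add_right, hdet]
  simpa [X] using trace_fderiv_velocity_eq_zero (t := 0) hX hXdet (by simpa [X] using hv) hXv

theorem differentiableAt_uncurry_leftInverse {Y : ℝ → V → V} {t : ℝ} {ξ : V}
    (hX : ContDiffAt ℝ 1 (uncurry X) (t, ξ)) (hdet : (fderiv ℝ (X t) ξ).det ≠ 0)
    (hYX : ∀ s, LeftInverse (Y s) (X s)) :
    DifferentiableAt ℝ (uncurry Y) (t, X t ξ) := by
  have hXd : DifferentiableAt ℝ (uncurry X) (t, ξ) := hX.differentiableAt one_ne_zero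
  let A : ℝ × V →L[ℝ] ℝ × V := (ContinuousLinearMap.fst ℝ ℝ V).prod (fderiv ℝ (uncurry X) (t, ξ))
  have hA : Injective A := by
    rw [injective_iff_map_eq_zero]
    rintro ⟨a, w⟩ haw
    obtain ⟨rfl, hw⟩ : a = 0 ∧ fderiv ℝ (uncurry X) (t, ξ) (a, w) = 0 := by simpa [A] using haw
    have hw' : fderiv ℝ (X t) ξ w = 0 := by
      rwa [(hasFDerivAt_of_differentiableAt_uncurry hXd).fderiv]
    let e := (fderiv ℝ (X t) ξ).toContinuousLinearEquivOfDetNeZero hdet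
    simpa using e.injective (a₁ := w) (a₂ := 0) (by simpa [e] using hw')
  let e : (ℝ × V) ≃L[ℝ] ℝ × V :=
    (LinearEquiv.ofInjectiveEndo A.toLinearMap hA).toContinuousLinearEquiv
  have hgraph : HasStrictFDerivAt (fun q : ℝ × V => (q.1, uncurry X q))
      (e : ℝ × V →L[ℝ] ℝ × V) (t, ξ) :=
    hasStrictFDerivAt_fst.prodMk (hX.hasStrictFDerivAt one_ne_zero)
  have hinv : HasStrictFDerivAt (fun q : ℝ × V => (q.1, uncurry Y q)) _ (t, X t ξ) :=
    hgraph.to_local_left_inverse (.of_forall fun q => Prod.ext rfl (hYX q.1 q.2))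
  exact hinv.differentiableAt.snd

theorem differentiable_uncurry_inverse {Y : ℝ → V → V} (hX : ContDiff ℝ 1 (uncurry X))
    (hdet : ∀ t ξ, (fderiv ℝ (X t) ξ).det ≠ 0) (hYX : ∀ t, LeftInverse (Y t) (X t))
    (hXY : ∀ t, RightInverse (Y t) (X t)) : Differentiable ℝ (uncurry Y) := by
  rintro ⟨t, x⟩
  rw [← hXY t x]
  exact differentiableAt_uncurry_leftInverse hX.contDiffAt (hdet t _) hYX

end Motion

section VectorCalculus

section Partial

variable {E : Type*} [NormedAddCommGroup E] [NormedSpace ℝ E] {i : Fin 3} {x : V3}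

theorem pdx_eq_fderiv {f : V3 → E} (hf : DifferentiableAt ℝ f x) :
    pdx i f x = fderiv ℝ f x (Pi.single i 1) := by
  have hf' : HasFDerivAt f (fderiv ℝ f x) (Function.update x i (x i)) := by
    simpa using hf.hasFDerivAt
  exact (hf'.comp_hasDerivAt (x i) (hasDerivAt_update x i (x i))).deriv

theorem pdx_comp {g : V3 → E} {f : V3 → V3} (hg : DifferentiableAt ℝ g (f x))
    (hf : DifferentiableAt ℝ f x) : pdx i (fun y => g (f y)) x = fderiv ℝ g (f x) (pdx i f x) := by
  rw [pdx_eq_fderiv (hg.fun_comp' x hf), fderiv_fun_comp x hg hf, pdx_eq_fderiv hf]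
  rfl

theorem pdx_sub {f g : V3 → E} (hf : DifferentiableAt ℝ f x) (hg : DifferentiableAt ℝ g x) :
    pdx i (fun y => f y - g y) x = pdx i f x - pdx i g x := by
  simp [pdx_eq_fderiv, hf, hg, hf.fun_sub hg, fderiv_fun_sub hf hg]

theorem pdx_bilinear (b : V3 →ₗ[ℝ] V3 →ₗ[ℝ] E) {v w : V3 → V3}
    (hv : DifferentiableAt ℝ v x) (hw : DifferentiableAt ℝ w x) :
    pdx i (fun y => b (v y) (w y)) x = b (v x) (pdx i w x) + b (pdx i v x) (w x) := by
  have hb := b.toContinuousBilinearMap.hasFDerivAt_of_bilinear hv.hasFDerivAt hw.hasFDerivAt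
  have hpdx := (pdx_eq_fderiv (i := i) hb.differentiableAt).trans (by rw [hb.fderiv])
  simpa [pdx_eq_fderiv hv, pdx_eq_fderiv hw] using hpdx

theorem fderiv_eq_sum_pdx {f : V3 → E} (hf : DifferentiableAt ℝ f x) (w : V3) :
    fderiv ℝ f x w = ∑ j, w j • pdx j f x := by
  conv_lhs => rw [← Finset.univ_sum_single w]
  simp [pdx_eq_fderiv hf, ← map_smul, ← Pi.single_smul']

theorem contDiff_uncurry_pdx {F : ℝ → V3 → E} {n : WithTop ℕ∞}
    (hF : ContDiff ℝ (n + 1) (uncurry F)) : ContDiff ℝ n (uncurry fun t => pdx i (F t)) := by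
  have heq : (uncurry fun t => pdx i (F t)) = fun q => fderiv ℝ (F q.1) q.2 (Pi.single i 1) :=
    funext fun q => pdx_eq_fderiv (differentiable_slice (hF.differentiable (by simp)) q.1 q.2)
  rw [heq]
  exact (contDiff_uncurry_fderiv hF).clm_apply contDiff_const

theorem deriv_pdx_comm {F : ℝ → V3 → E} (hF : ContDiff ℝ 2 (uncurry F)) (t : ℝ) :
    deriv (fun s => pdx i (F s) x) t = pdx i (fun y => deriv (fun s => F s y) t) x := by
  have hslice (s : ℝ) : DifferentiableAt ℝ (F s) x :=
    differentiable_slice (hF.differentiable two_ne_zero) s x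
  have hvelocity : DifferentiableAt ℝ (fun y => deriv (fun s => F s y) t) x :=
    differentiable_slice ((contDiff_uncurry_deriv (n := 1) hF).differentiable one_ne_zero) t x
  simp only [pdx_eq_fderiv hvelocity, pdx_eq_fderiv (hslice _)]
  simpa using ((hasDerivAt_fderiv_comm hF t x).clm_apply (hasDerivAt_const t (Pi.single i 1))).deriv

end Partial

variable {u v : V3 → V3} {x : V3}

theorem det_pdx_eq_det_fderiv (hv : DifferentiableAt ℝ v x) :
    (Matrix.of fun i j => pdx j v x i).det = (fderiv ℝ v x).det := by
  rw [ContinuousLinearMap.det, ← LinearMap.det_toMatrix']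
  congr 1
  ext i j
  simp [pdx_eq_fderiv hv, LinearMap.toMatrix'_apply]

theorem divV_eq_trace (hv : DifferentiableAt ℝ v x) :
    divV v x = LinearMap.trace ℝ V3 (fderiv ℝ v x) := by
  rw [LinearMap.trace_eq_matrix_trace ℝ (Pi.basisFun ℝ (Fin 3))]
  simp [divV, Matrix.trace, pdx_eq_fderiv hv]

theorem advectV_eq_fderiv (hv : DifferentiableAt ℝ v x) :
    advectV u v x = fderiv ℝ v x (u x) := by
  ext i
  simp [advectV, fderiv_eq_sum_pdx hv]

theorem curlV_crossProduct (hu : DifferentiableAt ℝ u x) (hv : DifferentiableAt ℝ v x) :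
    curlV (fun y => u y ⨯₃ v y) x =
      advectV v u x - advectV u v x + divV v x • u x - divV u x • v x := by
  ext i
  simp only [curlV, pdx_bilinear crossProduct hu hv]
  simp only [advectV, divV, Fin.sum_univ_three, Pi.add_apply, Pi.sub_apply, Pi.smul_apply,
    smul_eq_mul]
  fin_cases i <;>
    simp only [cross_apply, Fin.zero_eta, Fin.mk_one, Fin.reduceFinMk, cons_val_zero, cons_val_one,
      cons_val] <;>
    ring

theorem crossProduct_curlV_self (hv : DifferentiableAt ℝ v x) :
    v x ⨯₃ curlV v x = gradV (fun y => (1 / 2 : ℝ) * (v y ⬝ᵥ v y)) x - advectV v v x := by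
  have hgrad : gradV (fun y => (1 / 2 : ℝ) * (v y ⬝ᵥ v y)) x = fun i => v x ⬝ᵥ pdx i v x := by
    ext i
    have hpdx := pdx_bilinear (i := i) ((1 / 2 : ℝ) • dotProductBilin ℝ ℝ) hv hv
    simp only [LinearMap.smul_apply, dotProductBilin_apply_apply, smul_eq_mul] at hpdx
    rw [gradV, hpdx, dotProduct_comm (pdx i v x)]
    ring
  rw [hgrad]
  ext i
  simp only [Pi.sub_apply, advectV, curlV, dotProduct, Fin.sum_univ_three]
  fin_cases i <;>
    simp only [cross_apply, Fin.zero_eta, Fin.mk_one, Fin.reduceFinMk, cons_val_zero, cons_val_one,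
      cons_val] <;>
    ring

theorem crossProduct_curlV_self_add_gradV {q : V3 → ℝ} (hq : DifferentiableAt ℝ q x)
    (hv : DifferentiableAt ℝ v x) :
    v x ⨯₃ curlV v x + gradV (fun y => q y - (1 / 2 : ℝ) * (v y ⬝ᵥ v y)) x =
      gradV q x - advectV v v x := by
  have hgrad : gradV (fun y => q y - (1 / 2 : ℝ) * (v y ⬝ᵥ v y)) x =
      gradV q x - gradV (fun y => (1 / 2 : ℝ) * (v y ⬝ᵥ v y)) x := by
    ext i
    exact pdx_sub hq (by simp only [dotProduct]; fun_prop)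
  rw [crossProduct_curlV_self hv, hgrad]
  abel

theorem dotProduct_smul_crossProduct_cyclic {R : Type*} [CommRing R] (g a b c : Fin 3 → R) :
    (g ⬝ᵥ a) • b ⨯₃ c + (g ⬝ᵥ b) • c ⨯₃ a + (g ⬝ᵥ c) • a ⨯₃ b = (a ⬝ᵥ b ⨯₃ c) • g := by
  ext i
  simp only [dotProduct, Fin.sum_univ_three, Pi.add_apply, Pi.smul_apply, smul_eq_mul]
  fin_cases i <;>
    simp only [cross_apply, Fin.zero_eta, Fin.mk_one, Fin.reduceFinMk, cons_val_zero, cons_val_one,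
      cons_val] <;>
    ring

theorem pdx_comp_smul_crossProduct {f : V3 → ℝ} {g : V3 → V3} (hf : DifferentiableAt ℝ f (g x))
    (hg : DifferentiableAt ℝ g x) :
    pdx 0 (fun y => f (g y)) x • pdx 1 g x ⨯₃ pdx 2 g x
      + pdx 1 (fun y => f (g y)) x • pdx 2 g x ⨯₃ pdx 0 g x
      + pdx 2 (fun y => f (g y)) x • pdx 0 g x ⨯₃ pdx 1 g x =
      (Matrix.of fun i j => pdx j g x i).det • gradV f (g x) := by
  have hchain (i : Fin 3) : pdx i (fun y => f (g y)) x = gradV f (g x) ⬝ᵥ pdx i g x := by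
    rw [pdx_comp hf hg, fderiv_eq_sum_pdx hf]
    simp [gradV, dotProduct, mul_comm]
  have hdet : (Matrix.of fun i j => pdx j g x i).det = pdx 0 g x ⬝ᵥ pdx 1 g x ⨯₃ pdx 2 g x := by
    rw [triple_product_eq_det, ← det_transpose]
    congr 1
    ext i j
    fin_cases i <;> rfl
  rw [hchain, hchain, hchain, hdet, dotProduct_smul_crossProduct_cyclic]

end VectorCalculus

section MHD

variable {γ u B : ℝ → V3 → V3}

theorem deriv_comp_motion {f : ℝ → V3 → V3} {v : V3 → V3} {t : ℝ} {ξ : V3}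
    (hf : DifferentiableAt ℝ (uncurry f) (t, γ t ξ))
    (hγ : DifferentiableAt ℝ (fun s => γ s ξ) t) (hv : v (γ t ξ) = deriv (fun s => γ s ξ) t) :
    deriv (fun s => f s (γ s ξ)) t =
      deriv (fun s => f s (γ t ξ)) t + advectV v (f t) (γ t ξ) := by
  rw [deriv_along_curve hf hγ,
    advectV_eq_fderiv (hasFDerivAt_of_differentiableAt_uncurry hf).differentiableAt, hv]

theorem pdx_comp_eq_advectV {f g v : V3 → V3} {i : Fin 3} {ξ : V3}
    (hf : DifferentiableAt ℝ f (g ξ)) (hg : DifferentiableAt ℝ g ξ) (hv : v (g ξ) = pdx i g ξ) :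
    pdx i (fun y => f (g y)) ξ = advectV v f (g ξ) := by
  rw [pdx_comp hf hg, advectV_eq_fderiv hf, hv]

theorem deriv_add_advectV_eq_advectV {i : Fin 3} (hγ : ContDiff ℝ 2 (uncurry γ))
    (hu : Differentiable ℝ (uncurry u)) (hB : Differentiable ℝ (uncurry B))
    (huγ : ∀ t ξ, u t (γ t ξ) = deriv (fun s => γ s ξ) t)
    (hBγ : ∀ t ξ, B t (γ t ξ) = pdx i (γ t) ξ) (t : ℝ) (ξ : V3) :
    deriv (fun s => B s (γ t ξ)) t + advectV (u t) (B t) (γ t ξ) =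
      advectV (B t) (u t) (γ t ξ) := by
  have hγ₁ : Differentiable ℝ (uncurry γ) := hγ.differentiable two_ne_zero
  calc
    _ = deriv (fun s => B s (γ s ξ)) t :=
      (deriv_comp_motion (hB _)
        (hasDerivAt_of_differentiableAt_uncurry (hγ₁ _)).differentiableAt (huγ t ξ)).symm
    _ = deriv (fun s => pdx i (γ s) ξ) t := by simp only [hBγ]
    _ = pdx i (fun y => deriv (fun s => γ s y) t) ξ := deriv_pdx_comm hγ t
    _ = pdx i (fun y => u t (γ t y)) ξ := by simp only [huγ]
    _ = advectV (B t) (u t) (γ t ξ) :=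
      pdx_comp_eq_advectV (differentiable_slice hu t _) (differentiable_slice hγ₁ t _) (hBγ t ξ)

theorem divV_eq_zero_of_comp_eq_deriv {v : V3 → V3} {t : ℝ} {ξ : V3}
    (hγ : ContDiff ℝ 2 (uncurry γ)) (hdet : ∀ s, (fderiv ℝ (γ s) ξ).det = 1)
    (hv : DifferentiableAt ℝ v (γ t ξ)) (hvγ : ∀ ξ, v (γ t ξ) = deriv (fun s => γ s ξ) t) :
    divV v (γ t ξ) = 0 := by
  rw [divV_eq_trace hv]
  exact trace_fderiv_velocity_eq_zero hγ hdet hv fun ξ => (hvγ ξ).symm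

theorem divV_eq_zero_of_comp_eq_pdx {f v : V3 → V3} {i : Fin 3} {ξ : V3} (hf : ContDiff ℝ 2 f)
    (hdet : ∀ ξ, (fderiv ℝ f ξ).det = 1) (hv : DifferentiableAt ℝ v (f ξ))
    (hvf : ∀ ξ, v (f ξ) = pdx i f ξ) : divV v (f ξ) = 0 := by
  rw [divV_eq_trace hv]
  exact trace_fderiv_direction_eq_zero hf hdet hv fun ξ => by
    rw [hvf, pdx_eq_fderiv (hf.differentiable two_ne_zero ξ)]

theorem deriv_eq_curlV_crossProduct {i : Fin 3} (hγ : ContDiff ℝ 2 (uncurry γ))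
    (hu : Differentiable ℝ (uncurry u)) (hB : Differentiable ℝ (uncurry B))
    (huγ : ∀ t ξ, u t (γ t ξ) = deriv (fun s => γ s ξ) t)
    (hBγ : ∀ t ξ, B t (γ t ξ) = pdx i (γ t) ξ) {t : ℝ} {ξ : V3}
    (hdivu : divV (u t) (γ t ξ) = 0) (hdivB : divV (B t) (γ t ξ) = 0) :
    deriv (fun s => B s (γ t ξ)) t = curlV (fun y => u t y ⨯₃ B t y) (γ t ξ) := by
  rw [curlV_crossProduct (differentiable_slice hu t _) (differentiable_slice hB t _), hdivu, hdivB,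
    zero_smul, zero_smul, add_zero, sub_zero]
  exact eq_sub_of_add_eq (deriv_add_advectV_eq_advectV hγ hu hB huγ hBγ t ξ)

theorem momentum_of_systemN {P Q : ℝ → V3 → ℝ} (hγ : Differentiable ℝ (uncurry γ))
    (hu : Differentiable ℝ (uncurry u)) (hB : ∀ t, Differentiable ℝ (B t))
    (hQ : ∀ t, Differentiable ℝ (Q t))
    (huγ : ∀ t ξ, u t (γ t ξ) = deriv (fun s => γ s ξ) t)
    (hBγ : ∀ t ξ, B t (γ t ξ) = pdx 0 (γ t) ξ) (hQγ : ∀ t ξ, Q t (γ t ξ) = P t ξ)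
    (hsol : SystemN γ P) (t : ℝ) (ξ : V3) :
    deriv (fun s => u s (γ t ξ)) t + advectV (u t) (u t) (γ t ξ)
      + B t (γ t ξ) ⨯₃ curlV (B t) (γ t ξ)
      + gradV (fun y => Q t y - (1 / 2 : ℝ) * (B t y ⬝ᵥ B t y)) (γ t ξ) = 0 := by
  have hγt : DifferentiableAt ℝ (γ t) ξ := differentiable_slice hγ t ξ
  have acceleration : deriv (fun s => deriv (fun s' => γ s' ξ) s) t =
      deriv (fun s => u s (γ t ξ)) t + advectV (u t) (u t) (γ t ξ) := by
    simpa only [huγ] using deriv_comp_motion (hu (t, γ t ξ))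
      (hasDerivAt_of_differentiableAt_uncurry (hγ _)).differentiableAt (huγ t ξ)
  have tension : pdx 0 (fun y => pdx 0 (γ t) y) ξ = advectV (B t) (B t) (γ t ξ) := by
    simpa only [hBγ] using pdx_comp_eq_advectV (hB t _) hγt (hBγ t ξ)
  have pressure := pdx_comp_smul_crossProduct (hQ t _) hγt
  simp only [hQγ, hsol.2, one_smul] at pressure
  rw [add_assoc, crossProduct_curlV_self_add_gradV (hQ t _) (hB t _), ← acceleration, ← tension,
    ← pressure, ← hsol.1 t ξ]
  abel

end MHD

theorem naturalCoordinates_solve_MHD_general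
    (γ η : ℝ → V3 → V3) (P : ℝ → V3 → ℝ)
    (hγ : ContDiff ℝ 2 (uncurry γ))
    (hP : ∀ t, Differentiable ℝ (P t))
    (hleft : ∀ t, LeftInverse (η t) (γ t))
    (hright : ∀ t, RightInverse (η t) (γ t))
    (hsol : SystemN γ P)
    (u B : ℝ → V3 → V3) (p : ℝ → V3 → ℝ)
    (hu : ∀ t x, u t x = deriv (fun s => γ s (η t x)) t)
    (hB : ∀ t x, B t x = pdx 0 (γ t) (η t x))
    (hp : ∀ t x, p t x = P t (η t x) - (1 / 2 : ℝ) * (B t x ⬝ᵥ B t x)) :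
    (∀ t x, divV (u t) x = 0) ∧
    (∀ t x,
      deriv (fun s => u s x) t + advectV (u t) (u t) x
        + crossProduct (B t x) (curlV (B t) x) + gradV (p t) x = 0) ∧
    (∀ t x,
      deriv (fun s => B s x) t
        = curlV (fun y => crossProduct (u t y) (B t y)) x) ∧
    (∀ t x, divV (B t) x = 0) := by
  have hγ₁ : Differentiable ℝ (uncurry γ) := hγ.differentiable two_ne_zero
  have hdet (t : ℝ) (ξ : V3) : (fderiv ℝ (γ t) ξ).det = 1 := by
    rw [← det_pdx_eq_det_fderiv (differentiable_slice hγ₁ t ξ), hsol.2]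
  have hη : Differentiable ℝ (uncurry η) :=
    differentiable_uncurry_inverse (hγ.of_le one_le_two) (by simp [hdet]) hleft hright
  have hud : Differentiable ℝ (uncurry u) := by
    simpa only [← hu] using differentiable_uncurry_comp
      ((contDiff_uncurry_deriv (n := 1) hγ).differentiable one_ne_zero) hη
  have hBd : Differentiable ℝ (uncurry B) := by
    simpa only [← hB] using differentiable_uncurry_comp
      ((contDiff_uncurry_pdx (n := 1) (i := 0) hγ).differentiable one_ne_zero) hη
  have huγ (t : ℝ) (ξ : V3) : u t (γ t ξ) = deriv (fun s => γ s ξ) t := by rw [hu, hleft t]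
  have hBγ (t : ℝ) (ξ : V3) : B t (γ t ξ) = pdx 0 (γ t) ξ := by rw [hB, hleft t]
  have hdivu (t : ℝ) : ∀ x, divV (u t) x = 0 := (hright t).surjective.forall.2 fun ξ =>
    divV_eq_zero_of_comp_eq_deriv hγ (hdet · ξ) (differentiable_slice hud t _) (huγ t)
  have hdivB (t : ℝ) : ∀ x, divV (B t) x = 0 := (hright t).surjective.forall.2 fun ξ =>
    divV_eq_zero_of_comp_eq_pdx (hγ.comp (contDiff_prodMk_right t)) (hdet t)
      (differentiable_slice hBd t _) (hBγ t)
  refine ⟨hdivu, fun t => (hright t).surjective.forall.2 fun ξ => ?momentum,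
    fun t => (hright t).surjective.forall.2 fun ξ => ?induction, hdivB⟩
  case momentum =>
    rw [funext (hp t)]
    exact momentum_of_systemN hγ₁ hud (differentiable_slice hBd)
      (fun t => (hP t).comp (differentiable_slice hη t)) huγ hBγ
      (fun t ξ => congrArg (P t) (hleft t ξ)) hsol t ξ
  case induction =>
    exact deriv_eq_curlV_crossProduct hγ hud hBd huγ hBγ (hdivu t _) (hdivB t _)

/-- If `(γ, P)` is a smooth solution of system (N) with each `γ(t,·)` a diffeomorphism
of `ℝ³` (with smooth inverse `η(t,·)`), then the Eulerian fields
`u(t,x) = γ_t(t, γ(t,·)⁻¹(x))`, `B(t,x) = γ_{ξ¹}(t, γ(t,·)⁻¹(x))` and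
`p = P ∘ (t, γ(t,·)⁻¹) − ½|B|²`, together with constant density `ρ = 1`, solve the
incompressible ideal MHD equations. -/
theorem naturalCoordinates_solve_MHD
    (γ η : ℝ → V3 → V3) (P : ℝ → V3 → ℝ)
    (hγ : ContDiff ℝ (⊤ : ℕ∞) (fun q : ℝ × V3 => γ q.1 q.2))
    (hP : ContDiff ℝ (⊤ : ℕ∞) (fun q : ℝ × V3 => P q.1 q.2))
    (hη : ContDiff ℝ (⊤ : ℕ∞) (fun q : ℝ × V3 => η q.1 q.2))
    (hleft : ∀ t : ℝ, Function.LeftInverse (η t) (γ t))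
    (hright : ∀ t : ℝ, Function.RightInverse (η t) (γ t))
    (hsol : SystemN γ P)
    (u B : ℝ → V3 → V3) (p : ℝ → V3 → ℝ)
    (hu : ∀ t x, u t x = deriv (fun s => γ s (η t x)) t)
    (hB : ∀ t x, B t x = pdx 0 (γ t) (η t x))
    (hp : ∀ t x, p t x = P t (η t x) - (1 / 2 : ℝ) * (B t x ⬝ᵥ B t x)) :
    (∀ t x, divV (u t) x = 0) ∧
    (∀ t x,
      deriv (fun s => u s x) t + advectV (u t) (u t) x
        + crossProduct (B t x) (curlV (B t) x) + gradV (p t) x = 0) ∧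
    (∀ t x,
      deriv (fun s => B s x) t
        = curlV (fun y => crossProduct (u t y) (B t y)) x) ∧
    (∀ t x, divV (B t) x = 0) :=
  naturalCoordinates_solve_MHD_general γ η P (contDiff_infty.1 hγ 2)
    (differentiable_slice (hP.differentiable (by simp))) hleft hright hsol u B p hu hB hp
end
end

section
/- Let Ω ⊆ ℝ × ℝ³ be open and let u, B : Ω → ℝ³, ρ, p : Ω → ℝ be smooth with ρ > 0 on Ω. Set b = B/ρ and P = p + ½|B|². Then (u, B, ρ, p) satisfies the ideal MHD system: ρ_t + u·∇ρ + ρ div u = 0, ρ(u_t + (u·∇)u) + B × curl B + ∇p = 0, B_t = curl(u × B), div B = 0, if and only if (u, b, ρ, P) satisfies the transformed system: ρ_t + u·∇ρ + ρ div u = 0, ρ(D_t u − D_s(ρ b)) + ∇P = 0, D_t b = D_s u, div(ρ b) = 0, where D_t = ∂_t + u·∇ and D_s = b·∇ act componentwise on vector fields. -/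
open Matrix

noncomputable section

/-- Partial derivative with respect to time of a field on `ℝ × ℝ³`. -/
noncomputable def pt {E : Type*} [NormedAddCommGroup E] [NormedSpace ℝ E]
    (F : ℝ × V3 → E) (q : ℝ × V3) : E :=
  deriv (fun s => F (s, q.2)) q.1

/-- Spatial partial derivative in the `i`-th direction of a field on `ℝ × ℝ³`. -/
noncomputable def px {E : Type*} [NormedAddCommGroup E] [NormedSpace ℝ E]
    (i : Fin 3) (F : ℝ × V3 → E) (q : ℝ × V3) : E :=
  deriv (fun s => F (q.1, Function.update q.2 i s)) (q.2 i)

/-- Spatial divergence. -/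
noncomputable def divx (v : ℝ × V3 → V3) (q : ℝ × V3) : ℝ :=
  ∑ i, px i v q i

/-- Spatial gradient. -/
noncomputable def gradx (f : ℝ × V3 → ℝ) (q : ℝ × V3) : V3 :=
  fun i => px i f q

/-- Spatial curl. -/
noncomputable def curlx (v : ℝ × V3 → V3) (q : ℝ × V3) : V3 :=
  ![px 1 v q 2 - px 2 v q 1,
    px 2 v q 0 - px 0 v q 2,
    px 0 v q 1 - px 1 v q 0]

/-- Convective derivative `(u·∇)v`, acting componentwise. -/
noncomputable def advect (u v : ℝ × V3 → V3) (q : ℝ × V3) : V3 :=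
  fun i => ∑ j, u q j * px j v q i

/-!
For differentiable fields, `D_t` and `D_s` are the directional derivatives along `(1, u)` and
`(0, b)`, so they obey the Leibniz rule. Near a point where `ρ ≠ 0` we have `B = ρ b`, and two
identities of vector calculus give the equivalence:

* `B × curl B = ∇(½|B|²) - (B·∇)B`, where `(B·∇)B = ρ D_s(ρ b)`, makes the two momentum equations
  the same equation;
* `curl(u × B) = (B·∇)u - (u·∇)B + (div B) u - (div u) B` gives
  `B_t - curl(u × B) = ρ (D_t b - D_s u) + (ρ_t + u·∇ρ + ρ div u) b - (div B) u`,
  whose last two terms vanish by conservation of mass and `div B = 0`.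
-/

open scoped Topology

section CoordinateDerivatives

variable {E F G : Type*} [NormedAddCommGroup E] [NormedSpace ℝ E]
  [NormedAddCommGroup F] [NormedSpace ℝ F] [NormedAddCommGroup G] [NormedSpace ℝ G]
  {q : ℝ × V3}

theorem pt_eq_fderiv {f : ℝ × V3 → E} (hf : DifferentiableAt ℝ f q) :
    pt f q = fderiv ℝ f q (1, 0) :=
  (hf.hasFDerivAt.comp_hasDerivAt_of_eq q.1
    ((hasDerivAt_id q.1).prodMk (hasDerivAt_const q.1 q.2)) rfl).deriv

theorem px_eq_fderiv (i : Fin 3) {f : ℝ × V3 → E} (hf : DifferentiableAt ℝ f q) :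
    px i f q = fderiv ℝ f q (0, Pi.single i 1) :=
  (hf.hasFDerivAt.comp_hasDerivAt_of_eq (q.2 i)
    ((hasDerivAt_const (q.2 i) q.1).prodMk (hasDerivAt_update q.2 i (q.2 i)))
    (by simp only [Function.update_eq_self])).deriv

theorem sum_smul_px_eq_fderiv {f : ℝ × V3 → E} (hf : DifferentiableAt ℝ f q) (v : V3) :
    ∑ i, v i • px i f q = fderiv ℝ f q (0, v) := by
  have hv : (0, v) = ∑ i, v i • ((0, Pi.single i 1) : ℝ × V3) := by
    ext j <;> simp [Prod.fst_sum, Prod.snd_sum, Finset.sum_apply, Pi.single_apply]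
  simp only [hv, map_sum, map_smul, px_eq_fderiv _ hf]

theorem pt_congr {f g : ℝ × V3 → E} (h : f =ᶠ[𝓝 q] g) : pt f q = pt g q := by
  have hline : ContinuousAt (fun s => (s, q.2)) q.1 := by fun_prop
  exact (h.comp_tendsto hline).deriv_eq

theorem px_congr (i : Fin 3) {f g : ℝ × V3 → E} (h : f =ᶠ[𝓝 q] g) : px i f q = px i g q := by
  have hline : Filter.Tendsto (fun s => (q.1, Function.update q.2 i s)) (𝓝 (q.2 i)) (𝓝 q) :=
    Continuous.tendsto' (by fun_prop) _ _ (by simp only [Function.update_eq_self])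
  exact (h.comp_tendsto hline).deriv_eq

theorem px_add (i : Fin 3) {f g : ℝ × V3 → E}
    (hf : DifferentiableAt ℝ f q) (hg : DifferentiableAt ℝ g q) :
    px i (fun q' => f q' + g q') q = px i f q + px i g q := by
  rw [px_eq_fderiv i hf, px_eq_fderiv i hg, px_eq_fderiv i (hf.fun_add hg), fderiv_fun_add hf hg,
    _root_.add_apply]

theorem px_bilinear (i : Fin 3) [FiniteDimensional ℝ E] [FiniteDimensional ℝ F]
    (L : E →ₗ[ℝ] F →ₗ[ℝ] G) {f : ℝ × V3 → E} {g : ℝ × V3 → F}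
    (hf : DifferentiableAt ℝ f q) (hg : DifferentiableAt ℝ g q) :
    px i (fun q' => L (f q') (g q')) q = L (px i f q) (g q) + L (f q) (px i g q) := by
  have hL := L.toContinuousBilinearMap.hasFDerivAt_of_bilinear hf.hasFDerivAt hg.hasFDerivAt
  have h := (px_eq_fderiv i hL.differentiableAt).trans (DFunLike.congr_fun hL.fderiv _)
  rw [px_eq_fderiv i hf, px_eq_fderiv i hg, add_comm]
  exact h

end CoordinateDerivatives

section VectorCalculus

variable {u v w : ℝ × V3 → V3} {f g : ℝ × V3 → ℝ} {q : ℝ × V3}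

theorem advect_congr_right (u : ℝ × V3 → V3) (h : v =ᶠ[𝓝 q] w) :
    advect u v q = advect u w q := by
  ext i
  simp only [advect, px_congr _ h]

theorem advect_congr_left (v : ℝ × V3 → V3) (h : u q = w q) : advect u v q = advect w v q := by
  ext i
  simp only [advect, h]

theorem divx_congr (h : v =ᶠ[𝓝 q] w) : divx v q = divx w q := by
  simp only [divx, px_congr _ h]

theorem curlx_congr (h : v =ᶠ[𝓝 q] w) : curlx v q = curlx w q := by
  simp only [curlx, px_congr _ h]

theorem advect_smul_left (f : ℝ × V3 → ℝ) (u v : ℝ × V3 → V3) (q : ℝ × V3) :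
    advect (fun q' => f q' • u q') v q = f q • advect u v q := by
  ext i
  simp only [advect, Pi.smul_apply, smul_eq_mul, mul_assoc, Finset.mul_sum]

theorem gradx_add (hf : DifferentiableAt ℝ f q) (hg : DifferentiableAt ℝ g q) :
    gradx (fun q' => f q' + g q') q = gradx f q + gradx g q :=
  funext fun i => px_add i hf hg

theorem pt_add_dotProduct_gradx_eq_fderiv (u : ℝ × V3 → V3) (hf : DifferentiableAt ℝ f q) :
    pt f q + u q ⬝ᵥ gradx f q = fderiv ℝ f q (1, u q) := by
  have hgrad : u q ⬝ᵥ gradx f q = fderiv ℝ f q (0, u q) := sum_smul_px_eq_fderiv hf (u q)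
  rw [hgrad, pt_eq_fderiv hf, ← map_add, Prod.mk_add_mk, add_zero, zero_add]

theorem pt_add_advect_eq_fderiv (u : ℝ × V3 → V3) (hv : DifferentiableAt ℝ v q) :
    pt v q + advect u v q = fderiv ℝ v q (1, u q) := by
  have hadvect : advect u v q = fderiv ℝ v q (0, u q) := by
    rw [← sum_smul_px_eq_fderiv hv]
    ext i
    simp only [advect, Finset.sum_apply, Pi.smul_apply, smul_eq_mul]
  rw [hadvect, pt_eq_fderiv hv, ← map_add, Prod.mk_add_mk, add_zero, zero_add]

theorem pt_add_advect_smul (u : ℝ × V3 → V3)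
    (hf : DifferentiableAt ℝ f q) (hv : DifferentiableAt ℝ v q) :
    pt (fun q' => f q' • v q') q + advect u (fun q' => f q' • v q') q =
      f q • (pt v q + advect u v q) + (pt f q + u q ⬝ᵥ gradx f q) • v q := by
  rw [pt_add_advect_eq_fderiv u (hf.fun_smul hv), pt_add_advect_eq_fderiv u hv,
    pt_add_dotProduct_gradx_eq_fderiv u hf, fderiv_fun_smul hf hv]
  rfl

theorem gradx_half_dotProduct_self (hv : DifferentiableAt ℝ v q) :
    gradx (fun q' => (1 / 2 : ℝ) * (v q' ⬝ᵥ v q')) q = fun i => v q ⬝ᵥ px i v q := by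
  ext i
  have h := px_bilinear i ((1 / 2 : ℝ) • dotProductBilin ℝ ℝ) hv hv
  simp only [LinearMap.smul_apply, dotProductBilin_apply_apply, smul_eq_mul] at h
  rw [gradx, h, dotProduct_comm (px i v q)]
  ring

theorem cross_curlx (v w : ℝ × V3 → V3) (q : ℝ × V3) :
    v q ⨯₃ curlx w q = (fun i => v q ⬝ᵥ px i w q) - advect v w q := by
  ext i
  fin_cases i <;>
  · simp only [cross_apply, curlx, advect, dotProduct, Fin.sum_univ_three, Fin.zero_eta, Fin.mk_one,
      Fin.reduceFinMk, Fin.isValue, Pi.sub_apply, cons_val]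
    ring

theorem curlx_cross (hv : DifferentiableAt ℝ v q) (hw : DifferentiableAt ℝ w q) :
    curlx (fun q' => v q' ⨯₃ w q') q =
      advect w v q - advect v w q + divx w q • v q - divx v q • w q := by
  simp only [curlx, px_bilinear _ crossProduct hv hw]
  ext i
  fin_cases i <;>
  · simp only [cross_apply, advect, divx, Fin.sum_univ_three, Fin.zero_eta, Fin.mk_one,
      Fin.reduceFinMk, Fin.isValue, Pi.add_apply, Pi.sub_apply, Pi.smul_apply, smul_eq_mul,
      cons_val]
    ring

end VectorCalculus

section MHD

variable {u B b : ℝ × V3 → V3} {ρ p P : ℝ × V3 → ℝ} {q : ℝ × V3}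

theorem cross_curlx_self_add_gradx (hB : DifferentiableAt ℝ B q) (hp : DifferentiableAt ℝ p q) :
    B q ⨯₃ curlx B q + gradx p q =
      gradx (fun q' => p q' + (1 / 2 : ℝ) * (B q' ⬝ᵥ B q')) q - advect B B q := by
  have hsq : DifferentiableAt ℝ (fun q' => (1 / 2 : ℝ) * (B q' ⬝ᵥ B q')) q := by
    unfold dotProduct
    fun_prop
  rw [gradx_add hp hsq, gradx_half_dotProduct_self hB, cross_curlx]
  abel

theorem pt_sub_curlx_cross_smul (hu : DifferentiableAt ℝ u q) (hρ : DifferentiableAt ℝ ρ q)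
    (hb : DifferentiableAt ℝ b q) :
    pt (fun q' => ρ q' • b q') q - curlx (fun q' => u q' ⨯₃ (ρ q' • b q')) q =
      ρ q • (pt b q + advect u b q - advect b u q)
        + (pt ρ q + u q ⬝ᵥ gradx ρ q + ρ q * divx u q) • b q
        - divx (fun q' => ρ q' • b q') q • u q := by
  rw [curlx_cross hu (hρ.fun_smul hb), advect_smul_left]
  linear_combination (norm := module) pt_add_advect_smul u hρ hb

theorem pt_smul_eq_curlx_cross_smul_iff (hu : DifferentiableAt ℝ u q)
    (hρ : DifferentiableAt ℝ ρ q) (hb : DifferentiableAt ℝ b q) (hρq : ρ q ≠ 0)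
    (hmass : pt ρ q + u q ⬝ᵥ gradx ρ q + ρ q * divx u q = 0)
    (hdiv : divx (fun q' => ρ q' • b q') q = 0) :
    pt (fun q' => ρ q' • b q') q = curlx (fun q' => u q' ⨯₃ (ρ q' • b q')) q ↔
      pt b q + advect u b q = advect b u q := by
  rw [← sub_eq_zero, pt_sub_curlx_cross_smul hu hρ hb, hmass, hdiv, zero_smul, zero_smul,
    add_zero, sub_zero, smul_eq_zero_iff_right hρq, sub_eq_zero]

theorem momentum_eq_transformed_momentum (a : V3) (hB : DifferentiableAt ℝ B q)
    (hp : DifferentiableAt ℝ p q) (hρb : (fun q' => ρ q' • b q') =ᶠ[𝓝 q] B) :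
    ρ q • a + B q ⨯₃ curlx B q + gradx p q =
      ρ q • (a - advect b (fun q' => ρ q' • b q') q)
        + gradx (fun q' => p q' + (1 / 2 : ℝ) * (B q' ⬝ᵥ B q')) q := by
  have htension : ρ q • advect b (fun q' => ρ q' • b q') q = advect B B q := by
    rw [← advect_smul_left, advect_congr_left _ hρb.eq_of_nhds, advect_congr_right _ hρb]
  rw [add_assoc, cross_curlx_self_add_gradx hB hp, smul_sub, htension]
  abel

theorem mhd_transformed_equivalence_general
    (hu : DifferentiableAt ℝ u q) (hB : DifferentiableAt ℝ B q)
    (hρ : DifferentiableAt ℝ ρ q) (hp : DifferentiableAt ℝ p q) (hρq : ρ q ≠ 0)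
    (hb : ∀ q', b q' = (ρ q')⁻¹ • B q')
    (hP : ∀ q', P q' = p q' + (1 / 2 : ℝ) * (B q' ⬝ᵥ B q')) :
    (pt ρ q + u q ⬝ᵥ gradx ρ q + ρ q * divx u q = 0 ∧
      ρ q • (pt u q + advect u u q) + B q ⨯₃ curlx B q + gradx p q = 0 ∧
      pt B q = curlx (fun q' => u q' ⨯₃ B q') q ∧
      divx B q = 0)
    ↔
    (pt ρ q + u q ⬝ᵥ gradx ρ q + ρ q * divx u q = 0 ∧
      ρ q • ((pt u q + advect u u q) - advect b (fun q' => ρ q' • b q') q) + gradx P q = 0 ∧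
      pt b q + advect u b q = advect b u q ∧
      divx (fun q' => ρ q' • b q') q = 0) := by
  obtain rfl : P = _ := funext hP
  have hbq : DifferentiableAt ℝ b q := by
    rw [funext hb]
    exact (hρ.fun_inv hρq).fun_smul hB
  have hρb : (fun q' => ρ q' • b q') =ᶠ[𝓝 q] B := by
    filter_upwards [hρ.continuousAt.eventually_ne hρq] with q' hq'
    rw [hb, smul_inv_smul₀ hq']
  have hcross : (fun q' => u q' ⨯₃ (ρ q' • b q')) =ᶠ[𝓝 q] fun q' => u q' ⨯₃ B q' :=
    hρb.mono fun q' hq' => congrArg (u q' ⨯₃ ·) hq'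
  rw [← momentum_eq_transformed_momentum _ hB hp hρb, ← pt_congr hρb, ← curlx_congr hcross,
    ← divx_congr hρb]
  exact and_congr_right fun hmass => and_congr_right fun _ => and_congr_left fun hdiv =>
    pt_smul_eq_curlx_cross_smul_iff hu hρ hbq hρq hmass hdiv

end MHD

/-- Equivalence of the ideal MHD system with its transformed form in terms of
`b = B/ρ`, `P = p + ½|B|²`, `D_t = ∂_t + u·∇`, `D_s = b·∇` on an open set `Ω`
where the smooth fields have `ρ > 0`. -/
theorem mhd_transformed_equivalence
    (Ω : Set (ℝ × V3)) (hΩ : IsOpen Ω)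
    (u B : ℝ × V3 → V3) (ρ p : ℝ × V3 → ℝ)
    (hu : ContDiffOn ℝ (⊤ : ℕ∞) u Ω) (hB : ContDiffOn ℝ (⊤ : ℕ∞) B Ω)
    (hρ : ContDiffOn ℝ (⊤ : ℕ∞) ρ Ω) (hp : ContDiffOn ℝ (⊤ : ℕ∞) p Ω)
    (hρpos : ∀ q ∈ Ω, 0 < ρ q)
    (b : ℝ × V3 → V3) (hb : ∀ q, b q = (ρ q)⁻¹ • B q)
    (P : ℝ × V3 → ℝ) (hP : ∀ q, P q = p q + (1 / 2 : ℝ) * (B q ⬝ᵥ B q)) :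
    ((∀ q ∈ Ω, pt ρ q + u q ⬝ᵥ gradx ρ q + ρ q * divx u q = 0) ∧
     (∀ q ∈ Ω,
        ρ q • (pt u q + advect u u q)
          + crossProduct (B q) (curlx B q) + gradx p q = 0) ∧
     (∀ q ∈ Ω, pt B q = curlx (fun q' => crossProduct (u q') (B q')) q) ∧
     (∀ q ∈ Ω, divx B q = 0))
    ↔
    ((∀ q ∈ Ω, pt ρ q + u q ⬝ᵥ gradx ρ q + ρ q * divx u q = 0) ∧
     (∀ q ∈ Ω,
        ρ q • ((pt u q + advect u u q) - advect b (fun q' => ρ q' • b q') q)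
          + gradx P q = 0) ∧
     (∀ q ∈ Ω, pt b q + advect u b q = advect b u q) ∧
     (∀ q ∈ Ω, divx (fun q' => ρ q' • b q') q = 0)) := by
  simp only [← forall₂_and]
  refine forall₂_congr fun q hq => ?_
  have hΩq := hΩ.mem_nhds hq
  exact mhd_transformed_equivalence_general
    ((hu.contDiffAt hΩq).differentiableAt (by simp))
    ((hB.contDiffAt hΩq).differentiableAt (by simp))
    ((hρ.contDiffAt hΩq).differentiableAt (by simp))
    ((hp.contDiffAt hΩq).differentiableAt (by simp))
    (hρpos q hq).ne' hb hP
end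
end

section
/- Let a, b, φ : ℝ → ℝ and A, B : ℝ² → ℝ be smooth, let k ∈ ℝ, and suppose b(μ) + B(ξ²,ξ³) cos(φ(μ) + A(ξ²,ξ³)) > 0 on the domain considered. Define τ¹(μ,ξ²,ξ³) = a(μ) + B(ξ²,ξ³) sin(φ(μ) + A(ξ²,ξ³)), λ(μ,ξ²,ξ³) = √(b(μ) + B(ξ²,ξ³) cos(φ(μ) + A(ξ²,ξ³))), τ²(μ,λ) = λ cos kμ, τ³(μ,λ) = λ sin kμ. Then at every point of the domain, (τ²_μ τ³_λ − τ²_λ τ³_μ)·(λ_{ξ²} τ¹_{ξ³} − λ_{ξ³} τ¹_{ξ²}) = (k·B(ξ²,ξ³)/2)·(∂A/∂ξ² · ∂B/∂ξ³ − ∂A/∂ξ³ · ∂B/∂ξ²), where the subscripts denote the indicated partial derivatives, those of τ², τ³ taken with respect to their arguments (μ, λ) and evaluated at (μ, λ(μ,ξ²,ξ³)). -/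
open Real

noncomputable section

/-- Partial derivative of `f(s,b,c)` with respect to its first argument. -/
noncomputable def P1 (f : ℝ → ℝ → ℝ → ℝ) : ℝ → ℝ → ℝ → ℝ :=
  fun s b c => deriv (fun x => f x b c) s

/-- Partial derivative of `f(s,b,c)` with respect to its second argument. -/
noncomputable def P2 (f : ℝ → ℝ → ℝ → ℝ) : ℝ → ℝ → ℝ → ℝ :=
  fun s b c => deriv (fun x => f s x c) b

/-- Partial derivative of `f(s,b,c)` with respect to its third argument. -/
noncomputable def P3 (f : ℝ → ℝ → ℝ → ℝ) : ℝ → ℝ → ℝ → ℝ :=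
  fun s b c => deriv (fun x => f s b x) c

/-- Partial derivative of `f(x,y)` with respect to its first argument. -/
noncomputable def Q1 (f : ℝ → ℝ → ℝ) : ℝ → ℝ → ℝ :=
  fun x y => deriv (fun s => f s y) x

/-- Partial derivative of `f(x,y)` with respect to its second argument. -/
noncomputable def Q2 (f : ℝ → ℝ → ℝ) : ℝ → ℝ → ℝ :=
  fun x y => deriv (fun s => f x s) y

/-!
Both factors are Jacobians of polar coordinates. For fixed `μ`, the pair `(λ² - b, τ¹ - a)` has
polar coordinates `(B, φ + A)`, so `∂(λ², τ¹) = B ∂(B, A)` and hence `∂(λ, τ¹) = B ∂(B, A) / (2λ)`.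
The pair `(τ², τ³)` has polar coordinates `(λ, kμ)`, so `∂(τ², τ³)/∂(μ, λ) = -kλ`. In the product
`λ` cancels, and the sign is absorbed by `∂(B, A) = -∂(A, B)`.
-/

/-- Existence of both partial derivatives of `f` at `(x, y)`. It is weaker than differentiability of
the uncurried function, and is what makes `Q1 f x y` and `Q2 f x y` meaningful. -/
structure PartiallyDifferentiableAt (f : ℝ → ℝ → ℝ) (x y : ℝ) : Prop where
  fst : DifferentiableAt ℝ (fun s => f s y) x
  snd : DifferentiableAt ℝ (fun s => f x s) y

/-- The Jacobian determinant `∂(f, g)/∂(x, y)`, for functions in curried form. As `Q1` and `Q2` are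
built on `deriv`, it is meaningful only where `f` and `g` have partial derivatives. -/
def planarJacobian (f g : ℝ → ℝ → ℝ) (x y : ℝ) : ℝ :=
  Q1 f x y * Q2 g x y - Q2 f x y * Q1 g x y

section PlanarJacobian

variable {f g : ℝ → ℝ → ℝ} {x y : ℝ}

namespace PartiallyDifferentiableAt

theorem of_differentiableAt (h : DifferentiableAt ℝ (fun q : ℝ × ℝ => f q.1 q.2) (x, y)) :
    PartiallyDifferentiableAt f x y where
  fst := h.comp (f := fun s => (s, y)) x (by fun_prop)
  snd := h.comp (f := fun s => (x, s)) y (by fun_prop)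

theorem const_add (c : ℝ) (hf : PartiallyDifferentiableAt f x y) :
    PartiallyDifferentiableAt (fun s t => c + f s t) x y :=
  ⟨hf.fst.const_add c, hf.snd.const_add c⟩

theorem mul (hf : PartiallyDifferentiableAt f x y) (hg : PartiallyDifferentiableAt g x y) :
    PartiallyDifferentiableAt (fun s t => f s t * g s t) x y :=
  ⟨hf.fst.mul hg.fst, hf.snd.mul hg.snd⟩

theorem cos (hf : PartiallyDifferentiableAt f x y) :
    PartiallyDifferentiableAt (fun s t => Real.cos (f s t)) x y :=
  ⟨hf.fst.cos, hf.snd.cos⟩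

end PartiallyDifferentiableAt

theorem planarJacobian_swap (f g : ℝ → ℝ → ℝ) (x y : ℝ) :
    planarJacobian g f x y = -planarJacobian f g x y := by
  simp only [planarJacobian]
  ring

theorem planarJacobian_const_add_left (c : ℝ) (f g : ℝ → ℝ → ℝ) (x y : ℝ) :
    planarJacobian (fun s t => c + f s t) g x y = planarJacobian f g x y := by
  simp only [planarJacobian, Q1, Q2, deriv_const_add]

theorem planarJacobian_const_add_right (c : ℝ) (f g : ℝ → ℝ → ℝ) (x y : ℝ) :
    planarJacobian f (fun s t => c + g s t) x y = planarJacobian f g x y := by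
  simp only [planarJacobian, Q1, Q2, deriv_const_add]

theorem planarJacobian_sqrt_left (hf : PartiallyDifferentiableAt f x y) (h₀ : f x y ≠ 0)
    (g : ℝ → ℝ → ℝ) :
    planarJacobian (fun s t => √(f s t)) g x y = planarJacobian f g x y / (2 * √(f x y)) := by
  simp only [planarJacobian, Q1, Q2, deriv_sqrt hf.fst h₀, deriv_sqrt hf.snd h₀]
  ring

theorem planarJacobian_mul_cos_mul_sin {R Θ : ℝ → ℝ → ℝ} (hR : PartiallyDifferentiableAt R x y)
    (hΘ : PartiallyDifferentiableAt Θ x y) :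
    planarJacobian (fun s t => R s t * cos (Θ s t)) (fun s t => R s t * sin (Θ s t)) x y =
      R x y * planarJacobian R Θ x y := by
  simp only [planarJacobian, Q1, Q2, deriv_fun_mul hR.fst hΘ.fst.cos,
    deriv_fun_mul hR.snd hΘ.snd.cos, deriv_fun_mul hR.fst hΘ.fst.sin,
    deriv_fun_mul hR.snd hΘ.snd.sin, deriv_cos hΘ.fst, deriv_cos hΘ.snd, deriv_sin hΘ.fst,
    deriv_sin hΘ.snd]
  linear_combination R x y * (deriv (fun s => R s y) x * deriv (fun s => Θ x s) y -
    deriv (fun s => R x s) y * deriv (fun s => Θ s y) x) * sin_sq_add_cos_sq (Θ x y)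

end PlanarJacobian

theorem planarJacobian_mul_cos_mul_sin_const_mul (k m l : ℝ) :
    planarJacobian (fun m l => l * cos (k * m)) (fun m l => l * sin (k * m)) m l = -(k * l) := by
  have hl : PartiallyDifferentiableAt (fun _ l => l) m l := ⟨by fun_prop, by fun_prop⟩
  have hkm : PartiallyDifferentiableAt (fun m _ => k * m) m l := ⟨by fun_prop, by fun_prop⟩
  rw [planarJacobian_mul_cos_mul_sin hl hkm]
  simp [planarJacobian, Q1, Q2, mul_comm]

theorem planarJacobian_sqrt_mul_cos_mul_sin {A B : ℝ → ℝ → ℝ} {x y : ℝ} (a b φ : ℝ)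
    (hA : PartiallyDifferentiableAt A x y) (hB : PartiallyDifferentiableAt B x y)
    (h₀ : b + B x y * cos (φ + A x y) ≠ 0) :
    planarJacobian (fun s t => √(b + B s t * cos (φ + A s t)))
        (fun s t => a + B s t * sin (φ + A s t)) x y =
      B x y * planarJacobian B A x y / (2 * √(b + B x y * cos (φ + A x y))) := by
  have hθ := hA.const_add φ
  rw [planarJacobian_sqrt_left ((hB.mul hθ.cos).const_add b) h₀, planarJacobian_const_add_left,
    planarJacobian_const_add_right, planarJacobian_mul_cos_mul_sin hB hθ,
    planarJacobian_const_add_right]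

theorem toroidal_knotted_surfaces_general
    (a b φ : ℝ → ℝ) (A B : ℝ → ℝ → ℝ) (k : ℝ) {m x y : ℝ}
    (hA : PartiallyDifferentiableAt A x y) (hB : PartiallyDifferentiableAt B x y)
    (hpos : 0 < b m + B x y * cos (φ m + A x y))
    (tau1 lam : ℝ → ℝ → ℝ → ℝ) (tau2 tau3 : ℝ → ℝ → ℝ)
    (htau1 : ∀ m x y : ℝ, tau1 m x y = a m + B x y * sin (φ m + A x y))
    (hlam : ∀ m x y : ℝ, lam m x y = sqrt (b m + B x y * cos (φ m + A x y)))
    (htau2 : ∀ m l : ℝ, tau2 m l = l * cos (k * m))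
    (htau3 : ∀ m l : ℝ, tau3 m l = l * sin (k * m)) :
    planarJacobian tau2 tau3 m (lam m x y) * planarJacobian (lam m) (tau1 m) x y =
      (k * B x y / 2) * planarJacobian A B x y := by
  have hlam_ne : lam m x y ≠ 0 := by
    rw [hlam]
    exact (sqrt_pos.2 hpos).ne'
  have hτ : planarJacobian tau2 tau3 m (lam m x y) = -(k * lam m x y) := by
    rw [funext₂ htau2, funext₂ htau3, planarJacobian_mul_cos_mul_sin_const_mul]
  have hlamτ : planarJacobian (lam m) (tau1 m) x y =
      B x y * planarJacobian B A x y / (2 * lam m x y) := by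
    rw [funext₂ (hlam m), funext₂ (htau1 m),
      planarJacobian_sqrt_mul_cos_mul_sin _ _ _ hA hB hpos.ne']
  rw [hτ, hlamτ, planarJacobian_swap A B]
  field_simp

/-- The toroidal/knotted magnetic surface family: for
`τ¹ = a(μ) + B sin(φ(μ) + A)`, `λ = √(b(μ) + B cos(φ(μ) + A))`,
`τ² = λ cos kμ`, `τ³ = λ sin kμ`, on the (open) domain where
`b(μ) + B cos(φ(μ) + A) > 0` one has
`(τ²_μ τ³_λ − τ²_λ τ³_μ)(λ₂ τ¹₃ − λ₃ τ¹₂) = (kB/2)·∂(A,B)/∂(ξ²,ξ³)`. -/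
theorem toroidal_knotted_surfaces
    (a b φ : ℝ → ℝ) (A B : ℝ → ℝ → ℝ) (k : ℝ)
    (ha : ContDiff ℝ (⊤ : ℕ∞) a) (hb : ContDiff ℝ (⊤ : ℕ∞) b) (hφ : ContDiff ℝ (⊤ : ℕ∞) φ)
    (hA : ContDiff ℝ (⊤ : ℕ∞) (fun q : ℝ × ℝ => A q.1 q.2))
    (hB : ContDiff ℝ (⊤ : ℕ∞) (fun q : ℝ × ℝ => B q.1 q.2))
    (D : Set (ℝ × ℝ × ℝ)) (hD : IsOpen D)
    (hpos : ∀ m x y : ℝ, (m, x, y) ∈ D →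
      0 < b m + B x y * cos (φ m + A x y))
    (tau1 lam : ℝ → ℝ → ℝ → ℝ) (tau2 tau3 : ℝ → ℝ → ℝ)
    (htau1 : ∀ m x y : ℝ, tau1 m x y = a m + B x y * sin (φ m + A x y))
    (hlam : ∀ m x y : ℝ, lam m x y = sqrt (b m + B x y * cos (φ m + A x y)))
    (htau2 : ∀ m l : ℝ, tau2 m l = l * cos (k * m))
    (htau3 : ∀ m l : ℝ, tau3 m l = l * sin (k * m)) :
    ∀ m x y : ℝ, (m, x, y) ∈ D →
      (Q1 tau2 m (lam m x y) * Q2 tau3 m (lam m x y)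
          - Q2 tau2 m (lam m x y) * Q1 tau3 m (lam m x y))
        * (P2 lam m x y * P3 tau1 m x y - P3 lam m x y * P2 tau1 m x y)
      = (k * B x y / 2) * (Q1 A x y * Q2 B x y - Q2 A x y * Q1 B x y) := by
  intro m x y hm
  -- `P2 f m` and `P3 f m` are definitionally `Q1 (f m)` and `Q2 (f m)`.
  exact toroidal_knotted_surfaces_general a b φ A B k
    (.of_differentiableAt (hA.differentiable (by simp) _))
    (.of_differentiableAt (hB.differentiable (by simp) _))
    (hpos m x y hm) tau1 lam tau2 tau3 htau1 hlam htau2 htau3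
end
end

section
/- Let k ∈ ℝ, define h(p,ρ) = ρᵏ for ρ > 0, and let c₁, c₂, c₃ ∈ ℝ. Then the classifying equation 2c₁(h + 4p h_p + 5ρ h_ρ) − 4c₂(p h_p + ρ h_ρ) − c₃ h_p = 0 holds for all p ∈ ℝ and all ρ > 0 if and only if c₁(1 + 5k) − 2k c₂ = 0 (with c₃ arbitrary). -/
open Real

noncomputable section

/-- Partial derivative `h_p` of `h(p,ρ)` with respect to the pressure `p`. -/
noncomputable def Hp (h : ℝ → ℝ → ℝ) : ℝ → ℝ → ℝ :=
  fun p r => deriv (fun s => h s r) p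

/-- Partial derivative `h_ρ` of `h(p,ρ)` with respect to the density `ρ`. -/
noncomputable def Hr (h : ℝ → ℝ → ℝ) : ℝ → ℝ → ℝ :=
  fun p r => deriv (fun s => h p s) r

/-- The left-hand side of the classifying equation
`2c₁(h + 4p h_p + 5ρ h_ρ) − 4c₂(p h_p + ρ h_ρ) − c₃ h_p`. -/
noncomputable def classify (c₁ c₂ c₃ : ℝ) (h : ℝ → ℝ → ℝ) (p r : ℝ) : ℝ :=
  2 * c₁ * (h p r + 4 * p * Hp h p r + 5 * r * Hr h p r)
    - 4 * c₂ * (p * Hp h p r + r * Hr h p r) - c₃ * Hp h p r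

theorem Hp_of_indep_pressure (f : ℝ → ℝ) (p r : ℝ) : Hp (fun _ => f) p r = 0 :=
  deriv_const p (f r)

theorem classify_of_indep_pressure (c₁ c₂ c₃ : ℝ) (f : ℝ → ℝ) (p r : ℝ) :
    classify c₁ c₂ c₃ (fun _ => f) p r =
      2 * c₁ * f r + (10 * c₁ - 4 * c₂) * (r * deriv f r) := by
  rw [classify, Hp_of_indep_pressure, Hr]
  ring

theorem mul_deriv_rpow_const {r : ℝ} (hr : r ≠ 0) (k : ℝ) :
    r * deriv (fun s : ℝ => s ^ k) r = k * r ^ k := by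
  rw [Real.deriv_rpow_const, Real.rpow_sub_one hr]
  field_simp

theorem classify_rpow (k c₁ c₂ c₃ p : ℝ) {r : ℝ} (hr : r ≠ 0) :
    classify c₁ c₂ c₃ (fun _ s => s ^ k) p r =
      2 * (c₁ * (1 + 5 * k) - 2 * k * c₂) * r ^ k := by
  rw [classify_of_indep_pressure, mul_deriv_rpow_const hr]
  ring

theorem classify_rpow_eq_zero_iff (k c₁ c₂ c₃ p : ℝ) {r : ℝ} (hr : 0 < r) :
    classify c₁ c₂ c₃ (fun _ s => s ^ k) p r = 0 ↔ c₁ * (1 + 5 * k) - 2 * k * c₂ = 0 := by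
  rw [classify_rpow k c₁ c₂ c₃ p hr.ne', mul_eq_zero_iff_right (Real.rpow_pos_of_pos hr k).ne',
    mul_eq_zero_iff_left two_ne_zero]

/-- Group classification, case `h(p,ρ) = ρᵏ`: the classifying equation holds
identically for `p ∈ ℝ`, `ρ > 0` iff `c₁(1 + 5k) − 2k c₂ = 0` (`c₃` arbitrary). -/
theorem classification_rho_pow
    (k c₁ c₂ c₃ : ℝ) :
    (∀ p r : ℝ, 0 < r → classify c₁ c₂ c₃ (fun _ r' => r' ^ k) p r = 0)
      ↔ c₁ * (1 + 5 * k) - 2 * k * c₂ = 0 := by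
  constructor
  · intro h
    exact (classify_rpow_eq_zero_iff k c₁ c₂ c₃ 0 one_pos).mp (h 0 1 one_pos)
  · intro h p r hr
    exact (classify_rpow_eq_zero_iff k c₁ c₂ c₃ p hr).mpr h
end
end

section
/- Let k ∈ ℝ and let f : ℝ → ℝ be differentiable; define h(p,ρ) = pᵏ f(ρ pᵏ⁻¹) on the region p > 0, ρ > 0. If c₁, c₂, c₃ ∈ ℝ satisfy (1 + 4k)c₁ − 2k c₂ = 0 and c₃ = 0, then the classifying equation 2c₁(h + 4p h_p + 5ρ h_ρ) − 4c₂(p h_p + ρ h_ρ) − c₃ h_p = 0 holds for all p > 0 and ρ > 0. -/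
open Real

noncomputable section

/-!
`h(p, ρ) = pᵏ f(ρ pᵏ⁻¹)` is quasi-homogeneous: the argument of `f` is invariant under
`p ↦ λ p`, `ρ ↦ λ¹⁻ᵏ ρ`, and `h` scales by `λᵏ`. Euler's identity for this scaling reads
`p h_p = k h + (k - 1) ρ h_ρ`. Eliminating `p h_p` with it turns both brackets of the classifying
equation into multiples of `h + ρ h_ρ`, with factors `1 + 4k` and `k`.
-/

theorem Hr_rpow_mul_comp (a b : ℝ) (f : ℝ → ℝ) (p r : ℝ) :
    Hr (fun p' r' => p' ^ a * f (r' * p' ^ b)) p r = p ^ a * (p ^ b * deriv f (r * p ^ b)) := by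
  simp only [Hr, deriv_const_mul_field, mul_comm _ (p ^ b), deriv_comp_mul_left, smul_eq_mul]

theorem Hp_rpow_mul_comp {a b : ℝ} {f : ℝ → ℝ} {p r : ℝ} (hp : p ≠ 0)
    (hf : DifferentiableAt ℝ f (r * p ^ b)) :
    Hp (fun p' r' => p' ^ a * f (r' * p' ^ b)) p r =
      a * p ^ (a - 1) * f (r * p ^ b) +
        p ^ a * (deriv f (r * p ^ b) * (r * (b * p ^ (b - 1)))) := by
  have hpow (c : ℝ) : HasDerivAt (fun s : ℝ => s ^ c) (c * p ^ (c - 1)) p :=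
    Real.hasDerivAt_rpow_const (Or.inl hp)
  exact ((hpow a).mul (hf.hasDerivAt.comp p ((hpow b).const_mul r))).deriv

theorem mul_Hp_rpow_mul_comp {a b : ℝ} {f : ℝ → ℝ} {p r : ℝ} (hp : p ≠ 0)
    (hf : DifferentiableAt ℝ f (r * p ^ b)) :
    p * Hp (fun p' r' => p' ^ a * f (r' * p' ^ b)) p r =
      a * (p ^ a * f (r * p ^ b)) +
        b * (r * Hr (fun p' r' => p' ^ a * f (r' * p' ^ b)) p r) := by
  have hpow (c : ℝ) : p * p ^ (c - 1) = p ^ c := by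
    rw [Real.rpow_sub_one hp, mul_div_cancel₀ _ hp]
  rw [Hp_rpow_mul_comp hp hf, Hr_rpow_mul_comp]
  linear_combination a * f (r * p ^ b) * hpow a +
    p ^ a * deriv f (r * p ^ b) * r * b * hpow b

theorem classify_eq_of_mul_Hp_eq {k p r : ℝ} {h : ℝ → ℝ → ℝ}
    (euler : p * Hp h p r = k * h p r + (k - 1) * (r * Hr h p r)) (c₁ c₂ c₃ : ℝ) :
    classify c₁ c₂ c₃ h p r =
      2 * ((1 + 4 * k) * c₁ - 2 * k * c₂) * (h p r + r * Hr h p r) - c₃ * Hp h p r := by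
  unfold classify
  linear_combination (8 * c₁ - 4 * c₂) * euler

theorem classification_pk_f_general {k c₁ c₂ c₃ : ℝ} {f : ℝ → ℝ} {p r : ℝ} (hp : p ≠ 0)
    (hf : DifferentiableAt ℝ f (r * p ^ (k - 1)))
    (hc : (1 + 4 * k) * c₁ - 2 * k * c₂ = 0) (hc₃ : c₃ = 0) :
    classify c₁ c₂ c₃ (fun p' r' => p' ^ k * f (r' * p' ^ (k - 1))) p r = 0 := by
  rw [classify_eq_of_mul_Hp_eq (mul_Hp_rpow_mul_comp hp hf), hc, hc₃]
  ring

/-- Group classification, case `h(p,ρ) = pᵏ f(ρ pᵏ⁻¹)` on `p > 0`, `ρ > 0`: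
if `(1 + 4k)c₁ − 2k c₂ = 0` and `c₃ = 0`, the classifying equation holds. -/
theorem classification_pk_f
    (k c₁ c₂ c₃ : ℝ) (f : ℝ → ℝ) (hf : Differentiable ℝ f)
    (hc : (1 + 4 * k) * c₁ - 2 * k * c₂ = 0) (hc₃ : c₃ = 0) :
    ∀ p r : ℝ, 0 < p → 0 < r →
      classify c₁ c₂ c₃ (fun p' r' => p' ^ k * f (r' * p' ^ (k - 1))) p r = 0 := by
  exact fun p r hp _ => classification_pk_f_general hp.ne' (hf _) hc hc₃
end
end

section
/- Let f : ℝ → ℝ be differentiable and define h(p,ρ) = f(ρ e^p)/ρ on the region ρ > 0. If c₁ ∈ ℝ and c₂ = c₃ = 2c₁, then the classifying equation 2c₁(h + 4p h_p + 5ρ h_ρ) − 4c₂(p h_p + ρ h_ρ) − c₃ h_p = 0 holds for all p ∈ ℝ and all ρ > 0. -/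
open Real

noncomputable section

/-! For `c₂ = c₃ = 2c₁` the classifying equation reduces to `2c₁ (h + ρ h_ρ − h_p) = 0`. Along the
characteristics of the linear equation `h_p − ρ h_ρ = h` both `ρ eᵖ` and `ρ h` are constant, so it
is solved by taking `ρ h` to be a function of `ρ eᵖ`. -/

theorem classify_two_mul_two_mul (c : ℝ) (h : ℝ → ℝ → ℝ) (p r : ℝ) :
    classify c (2 * c) (2 * c) h p r = 2 * c * (h p r + r * Hr h p r - Hp h p r) := by
  unfold classify
  ring

section PartialDerivatives

variable {f : ℝ → ℝ} {p r : ℝ}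

theorem Hp_comp_mul_exp_div (hr : r ≠ 0) (hf : DifferentiableAt ℝ f (r * Real.exp p)) :
    Hp (fun p' r' => f (r' * Real.exp p') / r') p r =
      deriv f (r * Real.exp p) * Real.exp p := by
  have hderiv : HasDerivAt (fun s => f (r * Real.exp s) / r)
      (deriv f (r * Real.exp p) * (r * Real.exp p) / r) p :=
    (hf.hasDerivAt.comp p ((Real.hasDerivAt_exp p).const_mul r)).div_const r
  rw [Hp, hderiv.deriv]
  field_simp

theorem Hr_comp_mul_exp_div (hr : r ≠ 0) (hf : DifferentiableAt ℝ f (r * Real.exp p)) :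
    Hr (fun p' r' => f (r' * Real.exp p') / r') p r =
      (deriv f (r * Real.exp p) * Real.exp p * r - f (r * Real.exp p)) / r ^ 2 := by
  have hderiv : HasDerivAt (fun s => f (s * Real.exp p) / s)
      ((deriv f (r * Real.exp p) * Real.exp p * r - f (r * Real.exp p) * 1) / r ^ 2) r :=
    (hf.hasDerivAt.comp r (hasDerivAt_mul_const (Real.exp p))).div (hasDerivAt_id r) hr
  rw [Hr, hderiv.deriv, mul_one]

theorem Hp_eq_add_mul_Hr_of_comp_mul_exp_div (hr : r ≠ 0)
    (hf : DifferentiableAt ℝ f (r * Real.exp p)) :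
    Hp (fun p' r' => f (r' * Real.exp p') / r') p r =
      f (r * Real.exp p) / r + r * Hr (fun p' r' => f (r' * Real.exp p') / r') p r := by
  rw [Hp_comp_mul_exp_div hr hf, Hr_comp_mul_exp_div hr hf]
  field_simp
  ring

end PartialDerivatives

theorem classification_f_rho_exp_general (c : ℝ) {f : ℝ → ℝ} {p r : ℝ} (hr : r ≠ 0)
    (hf : DifferentiableAt ℝ f (r * Real.exp p)) :
    classify c (2 * c) (2 * c) (fun p' r' => f (r' * Real.exp p') / r') p r = 0 := by
  rw [classify_two_mul_two_mul, Hp_eq_add_mul_Hr_of_comp_mul_exp_div hr hf, sub_self, mul_zero]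

/-- Group classification, case `h(p,ρ) = f(ρ eᵖ)/ρ` on `ρ > 0`: if
`c₂ = c₃ = 2c₁`, the classifying equation holds. -/
theorem classification_f_rho_exp
    (c₁ c₂ c₃ : ℝ) (f : ℝ → ℝ) (hf : Differentiable ℝ f)
    (hc₂ : c₂ = 2 * c₁) (hc₃ : c₃ = 2 * c₁) :
    ∀ p r : ℝ, 0 < r →
      classify c₁ c₂ c₃ (fun p' r' => f (r' * Real.exp p') / r') p r = 0 := by
  subst hc₂ hc₃
  exact fun p r hr => classification_f_rho_exp_general c₁ hr.ne' (hf _)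
end
end
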